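/- arXiv:math/0302156 — 3 statements merged into one kernel-verified Lean document; each statement's English description precedes it below -/
import Mathlib

section
/- Let k be a finite field of odd characteristic, let α ∈ k be a non-square (in particular α ≠ 0), and let ε ∈ k be nonzero. Then the number of pairs (x, y) ∈ k × k satisfying x² − α·y² = ε is exactly (card k) + 1. -/
/-!
Write `N (x, y) = x² - α y²`, the norm form of the quadratic extension `k(√α)`. It is multiplicative
and, `α` being a non-square, anisotropic. By Hilbert 90 the norm-one elements are the quotients
`u / conj u`, with `u` unique up to `k`-scaling: taking `u = 1` or `u = t + √α` parametrizes them by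
`Option k`, i.e. by the projective line (`normOneEquiv`). A pigeonhole argument on the values of two
quadratic polynomials gives a point of norm `ε`, and multiplication by that point carries the curve
`N = 1` bijectively onto the curve `N = ε`.
-/

section
variable {k : Type*} [Field k]

lemma sq_sub_ne_zero_of_not_isSquare {α : k} (hα : ¬ IsSquare α) (t : k) : t ^ 2 - α ≠ 0 := fun h =>
  hα ⟨t, by linear_combination -h⟩

/-- The rational parametrization of `x² - α y² = 1`: `none` goes to `1`, and `some t` to
`(t + √α) / (t - √α)`, in coordinates with respect to the basis `1, √α`. -/
noncomputable def normOneParam (α : k) : Option k → k × k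
  | none => (1, 0)
  | some t => ((t ^ 2 + α) / (t ^ 2 - α), 2 * t / (t ^ 2 - α))

/-- For a non-square `α`, `normOneParam` is a bijection onto the curve `x² - α y² = 1`. -/
noncomputable def normOneEquiv (h2 : (2 : k) ≠ 0) {α : k} (hα : ¬ IsSquare α) :
    Option k ≃ {q : k × k | q.1 ^ 2 - α * q.2 ^ 2 = 1} := by
  have hα0 : α ≠ 0 := fun h => hα (h ▸ IsSquare.zero)
  have hne := sq_sub_ne_zero_of_not_isSquare hα
  refine Equiv.ofBijective (fun o => ⟨normOneParam α o, ?_⟩) ⟨?_, ?_⟩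
  · rcases o with _ | t
    · simp [normOneParam]
    · have := hne t
      simp only [normOneParam, Set.mem_ofPred_eq]
      field_simp
      ring
  · rintro (_ | s) (_ | t) h
    · rfl
    · exfalso
      have ht := hne t
      simp only [normOneParam, Subtype.mk.injEq, Prod.mk.injEq] at h
      have h1 := h.1
      field_simp at h1
      exact mul_ne_zero h2 hα0 (by linear_combination -h1)
    · exfalso
      have hs := hne s
      simp only [normOneParam, Subtype.mk.injEq, Prod.mk.injEq] at h
      have h1 := h.1
      field_simp at h1
      exact mul_ne_zero h2 hα0 (by linear_combination h1)
    · have hs := hne s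
      have ht := hne t
      simp only [normOneParam, Subtype.mk.injEq, Prod.mk.injEq] at h
      obtain ⟨h1, h3⟩ := h
      rw [div_eq_div_iff hs ht] at h1 h3
      -- The first coordinate determines `s ^ 2`, and then the second one determines `s`.
      have h4 : s ^ 2 = t ^ 2 :=
        mul_left_cancel₀ (mul_ne_zero h2 hα0) (by linear_combination -h1)
      have h5 : s = t := by
        refine mul_left_cancel₀ (mul_ne_zero h2 ht) ?_
        linear_combination h3 + 2 * t * h4
      rw [h5]
  · rintro ⟨⟨c, d⟩, h⟩
    simp only [Set.mem_ofPred_eq] at h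
    by_cases hc : c = 1
    · subst hc
      have hd : d = 0 := by
        have : α * d ^ 2 = 0 := by linear_combination -h
        simpa [hα0] using this
      exact ⟨none, by simp [normOneParam, hd]⟩
    · have hc' : c - 1 ≠ 0 := sub_ne_zero.mpr hc
      -- `t = α d / (c - 1)` solves `c - 1 = 2 α / (t² - α)` and `d = 2 t / (t² - α)`.
      have key : (α * d / (c - 1)) ^ 2 - α = 2 * α / (c - 1) := by
        field_simp
        linear_combination -h
      refine ⟨some (α * d / (c - 1)), ?_⟩
      have e : (α * d / (c - 1)) ^ 2 + α = 2 * α / (c - 1) + 2 * α := by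
        linear_combination key
      simp only [normOneParam, Subtype.mk.injEq, Prod.mk.injEq, key, e]
      constructor
      · field_simp
        ring
      · field_simp

/-- Multiplication by `a + b √α`, an element of norm `ε`, as a bijection from the elements of norm
`1` to those of norm `ε`; the inverse multiplies by `(a - b √α) / ε`. -/
def normMulEquiv {α ε a b : k} (hε : ε ≠ 0) (hab : a ^ 2 - α * b ^ 2 = ε) :
    {q : k × k | q.1 ^ 2 - α * q.2 ^ 2 = 1} ≃ {q : k × k | q.1 ^ 2 - α * q.2 ^ 2 = ε} where
  toFun q := ⟨(a * q.1.1 + α * b * q.1.2, a * q.1.2 + b * q.1.1), by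
    have h : q.1.1 ^ 2 - α * q.1.2 ^ 2 = 1 := q.2
    simp only [Set.mem_ofPred_eq]
    linear_combination ε * h + (q.1.1 ^ 2 - α * q.1.2 ^ 2) * hab⟩
  invFun q := ⟨((a * q.1.1 - α * b * q.1.2) / ε, (a * q.1.2 - b * q.1.1) / ε), by
    have h : q.1.1 ^ 2 - α * q.1.2 ^ 2 = ε := q.2
    simp only [Set.mem_ofPred_eq]
    field_simp
    linear_combination ε * h + (q.1.1 ^ 2 - α * q.1.2 ^ 2) * hab⟩
  left_inv := by
    rintro ⟨⟨x, y⟩, h⟩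
    simp only [Subtype.mk.injEq, Prod.mk.injEq]
    constructor
    · field_simp
      linear_combination x * hab
    · field_simp
      linear_combination y * hab
  right_inv := by
    rintro ⟨⟨x, y⟩, h⟩
    simp only [Subtype.mk.injEq, Prod.mk.injEq]
    constructor
    · field_simp
      linear_combination x * hab
    · field_simp
      linear_combination y * hab

open Polynomial in
lemma exists_sq_sub_mul_sq_eq [Fintype k] (hchar : ringChar k ≠ 2) {α : k} (hα0 : α ≠ 0) (ε : k) :
    ∃ a b : k, a ^ 2 - α * b ^ 2 = ε := by
  obtain ⟨a, b, h⟩ := FiniteField.exists_root_sum_quadratic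
    (f := (X ^ 2 - C ε : k[X])) (g := (C (-α) * X ^ 2 : k[X]))
    (degree_X_pow_sub_C (by norm_num) ε) (degree_C_mul_X_pow 2 (neg_ne_zero.mpr hα0))
    (FiniteField.odd_card_of_char_ne_two hchar)
  simp only [eval_sub, eval_pow, eval_X, eval_C, eval_mul] at h
  exact ⟨a, b, by linear_combination h⟩

end

/-- Point count on the smooth affine conic `x² − α·y² = ε` over a finite field of
odd characteristic, with `α` a non-square and `ε ≠ 0`: it has `card k + 1` points. -/
theorem conic_point_count {k : Type*} [Field k] [Fintype k] (hchar : ringChar k ≠ 2)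
    (α : k) (hα : ¬ IsSquare α) (ε : k) (hε : ε ≠ 0) :
    ({q : k × k | q.1 ^ 2 - α * q.2 ^ 2 = ε} : Set (k × k)).ncard = Fintype.card k + 1 := by
  have hα0 : α ≠ 0 := fun h => hα (h ▸ IsSquare.zero)
  obtain ⟨a, b, hab⟩ := exists_sq_sub_mul_sq_eq hchar hα0 ε
  rw [← Nat.card_coe_set_eq, ← Nat.card_congr
    ((normOneEquiv (Ring.two_ne_zero hchar) hα).trans (normMulEquiv hε hab)),
    Nat.card_eq_fintype_card, Fintype.card_option]
end

section
/- (Lemme 8) Let k be a finite field of odd characteristic, let α ∈ k be a non-square, and let δ₁, δ₂ ∈ k be nonzero elements. Assume that δ₁² − α·δ₂² is a square in k. Then there exist nonzero ξ, η, ζ ∈ k such that ξ² − δ₁² = α·η² and ξ² − α·δ₂² = α·ζ². -/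
/-!
Write `χ` for the quadratic character of `k`, `a = δ₁²`, `b = α δ₂²`, so that `χ a = 1`,
`χ b = -1` and `χ (a - b) = 1`. It suffices to find `u` with `χ u = 1` and
`χ (u - a) = χ (u - b) = -1`, since a quotient of two non-squares is a square.
Expand `∑ u, (1 + χ u) (1 - χ (u - a)) (1 - χ (u - b))`. The linear sums vanish, and each
`∑ u, χ (u - p) χ (u - r)` with `p ≠ r` equals `-1` (a Jacobi sum). What is left is
`1 + ∑ u, (1 + χ (u (u - a) (u - b)))`, the number of rational points, including the one at
infinity, of the elliptic curve `y² = u (u - a) (u - b)`; it is positive. So some `u` has a nonzero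
term, and the hypotheses make the term vanish at `u = 0`, `u = a` and `u = b`.
-/

lemma sum_quadraticChar_sub {k : Type*} [Field k] [Fintype k] [DecidableEq k]
    (hchar : ringChar k ≠ 2) (p : k) : ∑ u : k, quadraticChar k (u - p) = 0 := by
  rw [← quadraticChar_sum_zero hchar]
  exact Fintype.sum_equiv (Equiv.subRight p) _ _ fun _ => rfl

/-- The affine substitution `u = p + (r - p) x` turns this sum into `χ (-1)` times the Jacobi sum
`∑ x, χ x * χ (1 - x) = -χ (-1)`. -/
lemma sum_quadraticChar_sub_mul_sub {k : Type*} [Field k] [Fintype k] [DecidableEq k]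
    (hchar : ringChar k ≠ 2) {p r : k} (h : p ≠ r) :
    ∑ u : k, quadraticChar k (u - p) * quadraticChar k (u - r) = -1 := by
  have hc : r - p ≠ 0 := sub_ne_zero.mpr h.symm
  have hJ := jacobiSum_nontrivial_inv (quadraticChar_ne_one hchar)
  rw [(quadraticChar_isQuadratic k).inv, jacobiSum] at hJ
  have hs : ∑ u : k, quadraticChar k (u - p) * quadraticChar k (u - r)
      = ∑ x : k, quadraticChar k (-1) * (quadraticChar k x * quadraticChar k (1 - x)) := by
    symm
    refine Fintype.sum_equiv ((Equiv.mulLeft₀ _ hc).trans (Equiv.addLeft p)) _ _ fun x => ?_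
    have h1 : p + (r - p) * x - p = (r - p) * x := by ring
    have h2 : p + (r - p) * x - r = (r - p) * (-1 * (1 - x)) := by ring
    simp only [Equiv.trans_apply, Equiv.mulLeft₀_apply, Equiv.coe_addLeft, h1, h2, map_mul]
    linear_combination (-(quadraticChar k (-1) * quadraticChar k x * quadraticChar k (1 - x))) *
      quadraticChar_sq_one hc
  rw [hs, ← Finset.mul_sum, hJ]
  linear_combination -(quadraticChar_sq_one (F := k) (neg_ne_zero.mpr one_ne_zero))

/-- A positive character sum yields `u` with none of the three factors zero; values `0` of the
character are still allowed here. -/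
lemma exists_quadraticChar_ne {k : Type*} [Field k] [Fintype k] [DecidableEq k]
    (hchar : ringChar k ≠ 2) {a b : k} (ha : a ≠ 0) (hb : b ≠ 0) (hab : a ≠ b) :
    ∃ u : k, quadraticChar k u ≠ -1 ∧ quadraticChar k (u - a) ≠ 1 ∧
      quadraticChar k (u - b) ≠ 1 := by
  by_contra! hno
  have hzero : ∑ u : k, (1 + quadraticChar k u) * (1 - quadraticChar k (u - a)) *
      (1 - quadraticChar k (u - b)) = 0 := by
    refine Finset.sum_eq_zero fun u _ => ?_
    by_cases h1 : quadraticChar k u = -1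
    · simp [h1]
    by_cases h2 : quadraticChar k (u - a) = 1
    · simp [h2]
    · simp [hno u h1 h2]
  have hpos : 0 ≤ ∑ u : k, (1 + quadraticChar k (u * (u - a) * (u - b))) := by
    refine Finset.sum_nonneg fun u _ => ?_
    rcases quadraticChar_isQuadratic k (u * (u - a) * (u - b)) with h | h | h <;> simp [h]
  have e0 : ∑ u : k, quadraticChar k u = 0 := quadraticChar_sum_zero hchar
  have e1 := sum_quadraticChar_sub hchar a
  have e2 := sum_quadraticChar_sub hchar b
  have e3 := sum_quadraticChar_sub_mul_sub hchar ha.symm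
  have e4 := sum_quadraticChar_sub_mul_sub hchar hb.symm
  have e5 := sum_quadraticChar_sub_mul_sub hchar hab
  simp only [sub_zero] at e3 e4
  have hexp : ∑ u : k, (1 + quadraticChar k u) * (1 - quadraticChar k (u - a)) *
      (1 - quadraticChar k (u - b)) =
      ∑ u : k, (1 + quadraticChar k (u * (u - a) * (u - b)))
      + ∑ u : k, quadraticChar k u - ∑ u : k, quadraticChar k (u - a)
      - ∑ u : k, quadraticChar k (u - b)
      - ∑ u : k, quadraticChar k u * quadraticChar k (u - a)
      - ∑ u : k, quadraticChar k u * quadraticChar k (u - b)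
      + ∑ u : k, quadraticChar k (u - a) * quadraticChar k (u - b) := by
    simp only [← Finset.sum_add_distrib, ← Finset.sum_sub_distrib]
    refine Finset.sum_congr rfl fun u _ => ?_
    simp only [map_mul]
    ring
  linarith

lemma exists_eq_mul_sq {k : Type*} [Field k] [Fintype k] [DecidableEq k]
    {α v : k} (hα : quadraticChar k α = -1)
    (hv : quadraticChar k v = -1) : ∃ η : k, η ≠ 0 ∧ v = α * η ^ 2 := by
  have hα0 : α ≠ 0 := by rintro rfl; simp at hα
  have hv0 : v ≠ 0 := by rintro rfl; simp at hv
  have h : quadraticChar k (α * v) = 1 := by rw [map_mul, hα, hv]; rfl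
  obtain ⟨w, hw⟩ := (quadraticChar_one_iff_isSquare (mul_ne_zero hα0 hv0)).mp h
  have hw0 : w ≠ 0 := by
    rintro rfl
    exact mul_ne_zero hα0 hv0 (by simpa using hw)
  refine ⟨w / α, div_ne_zero hw0 hα0, ?_⟩
  field_simp
  linear_combination hw


/-- (Lemme 8) Over a finite field of odd characteristic, with `α` a non-square and
`δ₁, δ₂` nonzero such that `δ₁² − α·δ₂²` is a square, there exist nonzero `ξ, η, ζ`
with `ξ² − δ₁² = α·η²` and `ξ² − α·δ₂² = α·ζ²`. -/
theorem lemme8 {k : Type*} [Field k] [Fintype k] (hchar : ringChar k ≠ 2)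
    (α : k) (hα : ¬ IsSquare α) (δ₁ δ₂ : k) (hδ₁ : δ₁ ≠ 0) (hδ₂ : δ₂ ≠ 0)
    (hsq : IsSquare (δ₁ ^ 2 - α * δ₂ ^ 2)) :
    ∃ ξ η ζ : k, ξ ≠ 0 ∧ η ≠ 0 ∧ ζ ≠ 0 ∧
      ξ ^ 2 - δ₁ ^ 2 = α * η ^ 2 ∧ ξ ^ 2 - α * δ₂ ^ 2 = α * ζ ^ 2 := by
  classical
  have hα' : quadraticChar k α = -1 := quadraticChar_neg_one_iff_not_isSquare.mpr hα
  have hα0 : α ≠ 0 := by rintro rfl; simp at hα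
  have hχa : quadraticChar k (δ₁ ^ 2) = 1 := quadraticChar_sq_one' hδ₁
  have hχb : quadraticChar k (α * δ₂ ^ 2) = -1 := by
    rw [map_mul, hα', quadraticChar_sq_one' hδ₂]; rfl
  have ha : δ₁ ^ 2 ≠ 0 := pow_ne_zero 2 hδ₁
  have hb : α * δ₂ ^ 2 ≠ 0 := mul_ne_zero hα0 (pow_ne_zero 2 hδ₂)
  have hab : δ₁ ^ 2 ≠ α * δ₂ ^ 2 := by
    intro h
    rw [h, hχb] at hχa
    norm_num at hχa
  have hχab := (quadraticChar_one_iff_isSquare (sub_ne_zero.mpr hab)).mpr hsq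
  obtain ⟨u, hu, hua, hub⟩ := exists_quadraticChar_ne hchar ha hb hab
  have hu0 : u ≠ 0 := by
    rintro rfl
    -- At `u = 0` the two differences have opposite nonzero characters, so one of them is `1`.
    rw [zero_sub, ← neg_one_mul, map_mul, hχa] at hua
    rw [zero_sub, ← neg_one_mul, map_mul, hχb] at hub
    rcases quadraticChar_dichotomy (F := k) (neg_ne_zero.mpr one_ne_zero) with h | h <;>
      simp [h] at hua hub
  have hua0 : u - δ₁ ^ 2 ≠ 0 := by
    intro h
    rw [sub_eq_zero.mp h] at hub
    exact hub hχab
  have hub0 : u - α * δ₂ ^ 2 ≠ 0 := by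
    intro h
    rw [sub_eq_zero.mp h] at hu
    exact hu hχb
  obtain ⟨ξ, hξ⟩ := (quadraticChar_one_iff_isSquare hu0).mp
    ((quadraticChar_dichotomy hu0).resolve_right hu)
  obtain ⟨η, hη0, hη⟩ := exists_eq_mul_sq hα'
    ((quadraticChar_dichotomy hua0).resolve_left hua)
  obtain ⟨ζ, hζ0, hζ⟩ := exists_eq_mul_sq hα'
    ((quadraticChar_dichotomy hub0).resolve_left hub)
  refine ⟨ξ, η, ζ, ?_, hη0, hζ0, ?_, ?_⟩
  · rintro rfl
    exact hu0 (by simpa using hξ)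
  · rw [← hη, hξ, sq ξ]
  · rw [← hζ, hξ, sq ξ]
end

section
/- (Lemme 12) Let k be a finite field of odd characteristic and let ε₁, ε₂ ∈ k be nonzero with ε₁ ≠ ε₂; set ε₁₂ = ε₁ − ε₂. Define sq : k → ZMod 2 by sq(x) = 0 if x is a square in k and sq(x) = 1 otherwise, define θ̄ : k → ZMod 2 × ZMod 2 by θ̄(0) = (sq(ε₁·ε₂), sq(−ε₁)), θ̄(ε₁) = (sq(ε₁), sq(ε₁·ε₁₂)), and θ̄(t) = (sq(t), sq(t − ε₁)) for t ∉ {0, ε₁}, and let Ω = {t ∈ k : t·(t − ε₁)·(t − ε₂) is a square in k}. Then the subgroup of (ZMod 2) × (ZMod 2) generated by the image θ̄(Ω) is the whole group (ZMod 2) × (ZMod 2). -/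
/-! A subgroup of `(ZMod 2)²` is everything as soon as none of the three nonzero characters
`p ↦ p.1`, `p ↦ p.2`, `p ↦ p.1 + p.2` is identically zero on it. Let `e` be the corresponding root
`0`, `ε₁`, `ε₂` of the cubic. At every `t ∈ Ω` with `t ≠ e` the character takes `thetaBar` to the
square class of `t - e`, also where `thetaBar` is defined by its special values at `0` and `ε₁`. So
it is enough to find, for each root `e`, a `t ∈ Ω` with `t - e` not a square; after translating `e`
to `0` this is `exists_nonsquare`.

That lemma is a counting argument, with `q` the order of `k`: if `(t - a) * (t - b)` were a nonzero
square for every non-square `t`, the Möbius map `t ↦ (t - a) / (t - b)` would inject the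
`(q - 1) / 2` non-squares into the `(q - 3) / 2` nonzero squares other than `1`. -/

open scoped Classical

/-- `sqClass x = 0` if `x` is a square, `1` otherwise. -/
noncomputable def sqClass {k : Type*} [Field k] (x : k) : ZMod 2 :=
  if IsSquare x then 0 else 1

/-- The map `θ̄ : k → ZMod 2 × ZMod 2` attached to `ε₁, ε₂, ε₁₂`. -/
noncomputable def thetaBar {k : Type*} [Field k] (ε₁ ε₂ ε₁₂ : k) (t : k) :
    ZMod 2 × ZMod 2 :=
  if t = 0 then (sqClass (ε₁ * ε₂), sqClass (-ε₁))
  else if t = ε₁ then (sqClass ε₁, sqClass (ε₁ * ε₁₂))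
  else (sqClass t, sqClass (t - ε₁))

lemma isSquare_mul_of_not {k : Type*} [Field k] [Fintype k] {x y : k}
    (hx : ¬ IsSquare x) (hy : ¬ IsSquare y) : IsSquare (x * y) := by
  have hx0 : x ≠ 0 := fun h => hx (by simp [h])
  have hy0 : y ≠ 0 := fun h => hy (by simp [h])
  rw [← quadraticChar_one_iff_isSquare (mul_ne_zero hx0 hy0), map_mul,
    quadraticChar_neg_one_iff_not_isSquare.mpr hx,
    quadraticChar_neg_one_iff_not_isSquare.mpr hy]
  norm_num

/-- The cubic `t * (t - a) * (t - b)` takes a square value (possibly `0`) at some non-square `t`. -/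
lemma exists_nonsquare {k : Type*} [Field k] [Fintype k] (hchar : ringChar k ≠ 2)
    (a b : k) (hab : a ≠ b) :
    ∃ t : k, ¬ IsSquare t ∧ IsSquare (t * (t - a) * (t - b)) := by
  by_contra! H
  have hsq : ∀ t : k, ¬ IsSquare t → t - a ≠ 0 ∧ t - b ≠ 0 ∧ IsSquare ((t - a) / (t - b)) := by
    intro t ht
    have h := H t ht
    have ha : t - a ≠ 0 := fun h0 => h (by simp [h0])
    have hb : t - b ≠ 0 := fun h0 => h (by simp [h0])
    refine ⟨ha, hb, ?_⟩
    -- Otherwise `t * (t - a) * (t - b)` is a product of two non-squares, up to a square.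
    by_contra hn
    apply h
    have h1 := isSquare_mul_of_not ht hn
    have h2 : t * (t - a) * (t - b) = t * ((t - a) / (t - b)) * ((t - b) * (t - b)) := by
      field_simp
    rw [h2]
    exact h1.mul ⟨_, rfl⟩
  obtain ⟨n, hn⟩ := FiniteField.exists_nonsquare hchar
  have hn0 : n ≠ 0 := fun h => hn (by simp [h])
  -- Multiplication by `n` identifies the nonzero squares with the non-squares.
  have hns : ∀ u : k, u ≠ 0 → IsSquare u → ¬ IsSquare (n * u) := by
    intro u hu hs h
    apply hn
    have := h.div hs
    rwa [mul_div_assoc, div_self hu, mul_one] at this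
  let S := {u : k // u ≠ 0 ∧ IsSquare u}
  let f : S → S := fun u =>
    ⟨(n * u.1 - a) / (n * u.1 - b),
      have h := hsq _ (hns u.1 u.2.1 u.2.2)
      ⟨div_ne_zero h.1 h.2.1, h.2.2⟩⟩
  have hf : Function.Injective f := by
    intro u v huv
    have h1 := congrArg Subtype.val huv
    have hu := hsq _ (hns u.1 u.2.1 u.2.2)
    have hv := hsq _ (hns v.1 v.2.1 v.2.2)
    change (n * u.1 - a) / (n * u.1 - b) = (n * v.1 - a) / (n * v.1 - b) at h1
    rw [div_eq_div_iff hu.2.1 hv.2.1] at h1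
    have h2 : (n * (a - b)) * (u.1 - v.1) = 0 := by linear_combination h1
    have h3 := (mul_eq_zero.mp h2).resolve_left (mul_ne_zero hn0 (sub_ne_zero.mpr hab))
    exact Subtype.ext (sub_eq_zero.mp h3)
  -- The value `1` of the Möbius map is attained only at infinity.
  obtain ⟨u, hu⟩ := Finite.surjective_of_injective hf ⟨1, one_ne_zero, IsSquare.one⟩
  have h1 := congrArg Subtype.val hu
  have hu' := hsq _ (hns u.1 u.2.1 u.2.2)
  change (n * u.1 - a) / (n * u.1 - b) = 1 at h1
  rw [div_eq_one_iff_eq hu'.2.1] at h1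
  exact hab (by linear_combination -h1)

lemma sqClass_mul {k : Type*} [Field k] [Fintype k] {x y : k}
    (hx : x ≠ 0) (hy : y ≠ 0) : sqClass (x * y) = sqClass x + sqClass y := by
  by_cases h1 : IsSquare x <;> by_cases h2 : IsSquare y
  · simp [sqClass, h1, h2, h1.mul h2]
  · have h : ¬ IsSquare (x * y) := fun h => h2 (by
      have := h.div h1
      rwa [mul_div_cancel_left₀ _ hx] at this)
    simp [sqClass, h1, h2, h]
  · have h : ¬ IsSquare (x * y) := fun h => h1 (by
      have := h.div h2
      rwa [mul_div_cancel_right₀ _ hy] at this)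
    simp [sqClass, h1, h2, h]
  · have h := isSquare_mul_of_not h1 h2
    simp only [sqClass, h1, h2, h, if_true, if_false]
    decide

lemma eq_top_of_characters (H : AddSubgroup (ZMod 2 × ZMod 2)) {p q r : ZMod 2 × ZMod 2}
    (hp : p ∈ H) (hq : q ∈ H) (hr : r ∈ H) (hp1 : p.1 = 1) (hq1 : q.2 = 1)
    (hr1 : r.1 + r.2 = 1) : H = ⊤ := by
  have key : ∀ p q r : ZMod 2 × ZMod 2, p.1 = 1 → q.2 = 1 → r.1 + r.2 = 1 → ∀ x,
      x = 0 ∨ x = p ∨ x = q ∨ x = r ∨ x = p + q ∨ x = p + r ∨ x = q + r := by decide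
  rw [eq_top_iff]
  rintro x -
  rcases key p q r hp1 hq1 hr1 x with h | h | h | h | h | h | h <;> subst h
  exacts [H.zero_mem, hp, hq, hr, H.add_mem hp hq, H.add_mem hp hr, H.add_mem hq hr]

/-- (Lemme 12) If `ε₁ ≠ ε₂` are nonzero and `ε₁₂ = ε₁ − ε₂`, the subgroup generated by
`θ̄(Ω)`, where `Ω = {t | t·(t − ε₁)·(t − ε₂) is a square}`, is all of `ZMod 2 × ZMod 2`. -/
theorem lemme12 {k : Type*} [Field k] [Fintype k] (hchar : ringChar k ≠ 2)
    (ε₁ ε₂ : k) (hε₁ : ε₁ ≠ 0) (hε₂ : ε₂ ≠ 0) (hne : ε₁ ≠ ε₂) :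
    AddSubgroup.closure
        (thetaBar ε₁ ε₂ (ε₁ - ε₂) '' {t : k | IsSquare (t * (t - ε₁) * (t - ε₂))}) =
      (⊤ : AddSubgroup (ZMod 2 × ZMod 2)) := by
  have mem : ∀ t : k, IsSquare (t * (t - ε₁) * (t - ε₂)) →
      thetaBar ε₁ ε₂ (ε₁ - ε₂) t ∈ AddSubgroup.closure
        (thetaBar ε₁ ε₂ (ε₁ - ε₂) '' {t : k | IsSquare (t * (t - ε₁) * (t - ε₂))}) :=
    fun t ht => AddSubgroup.subset_closure ⟨t, ht, rfl⟩
  obtain ⟨t, ht, htΩ⟩ := exists_nonsquare hchar ε₁ ε₂ hne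
  obtain ⟨u, hu, huΩ⟩ := exists_nonsquare hchar (-ε₁) (ε₂ - ε₁)
    (fun h => hε₂ (by linear_combination -h))
  obtain ⟨v, hv, hvΩ⟩ := exists_nonsquare hchar (-ε₂) (ε₁ - ε₂)
    (fun h => hε₁ (by linear_combination -h))
  have hu0 : u ≠ 0 := fun h => hu (by simp [h])
  have hv0 : v ≠ 0 := fun h => hv (by simp [h])
  refine eq_top_of_characters _ (mem t htΩ)
    (mem (u + ε₁) (by convert huΩ using 1; ring)) (mem (v + ε₂) (by convert hvΩ using 1; ring))
    ?_ ?_ ?_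
  · have ht0 : t ≠ 0 := fun h => ht (by simp [h])
    unfold thetaBar
    split_ifs with h1 h2
    · exact absurd h1 ht0
    · simp [sqClass, ← h2, ht]
    · simp [sqClass, ht]
  · unfold thetaBar
    split_ifs with h1 h2
    · simp [sqClass, ← eq_neg_of_add_eq_zero_left h1, hu]
    · exact absurd (by linear_combination h2) hu0
    · simp [sqClass, hu]
  · have hvc : sqClass v = 1 := by simp [sqClass, hv]
    have hcancel : ∀ x y : ZMod 2, x + (x + y) = y := by decide
    unfold thetaBar
    split_ifs with h1 h2
    · have hv' : v = -ε₂ := by linear_combination h1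
      -- `-ε₁` and `-ε₂` have product `ε₁ * ε₂`.
      have h := sqClass_mul (neg_ne_zero.mpr hε₁) (neg_ne_zero.mpr hε₂)
      rw [neg_mul_neg, ← hv', hvc] at h
      rw [h, add_comm, hcancel]
    · have hv' : ε₁ - ε₂ = v := by linear_combination -h2
      rw [hv', sqClass_mul hε₁ hv0, hvc, hcancel]
    · have h2' : v + ε₂ - ε₁ ≠ 0 := sub_ne_zero.mpr h2
      rw [← sqClass_mul h1 h2']
      have hn : ¬ IsSquare ((v + ε₂) * (v + ε₂ - ε₁)) := by
        intro h
        apply hv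
        have h3 := hvΩ.div h
        have h4 : v * (v - -ε₂) * (v - (ε₁ - ε₂)) / ((v + ε₂) * (v + ε₂ - ε₁)) = v := by
          rw [div_eq_iff (mul_ne_zero h1 h2')]
          ring
        rwa [h4] at h3
      simp [sqClass, hn]
end
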